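/- arXiv:0910.2186 — 5 statements merged into one kernel-verified Lean document; each statement's English description precedes it below -/
import Mathlib

section
/- Let d ≥ 1, let (Ω, F, P) be a probability space, and let X : ℝ^d × Ω → ℝ be a jointly measurable, stationary random field. Then X is continuous in probability: for every t₀ ∈ ℝ^d and every ε > 0, P(|X(t, ·) − X(t₀, ·)| > ε) → 0 as t → t₀ in ℝ^d. -/
open MeasureTheory Filter

/-!
Let `μ` be a Haar measure on the index group, and fix a measurable set `A` of values. For each `ω`
the set `{s | X s ω ∈ A}`, cut down to a set of finite measure, moves continuously in measure under
translation, hence so does its average over `ω`. By Tonelli this average is the integral over `s` of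
`P ({X (t + s) ∈ A} ∆ {X (t₀ + s) ∈ A})`, which by stationarity does not depend on `s`; so
`P ({X t ∈ A} ∆ {X t₀ ∈ A}) → 0`. Applying this to the balls of a countable cover of the state space
by small balls, finitely many of which carry almost all the mass of `X t₀`, gives convergence in
probability.
-/

open Set Function ProbabilityTheory
open scoped Topology ENNReal symmDiff

section ConvergenceInMeasure

variable {Ω E ι : Type*} [MeasurableSpace Ω] {P : Measure Ω} [IsFiniteMeasure P]
  [PseudoEMetricSpace E] [TopologicalSpace.SeparableSpace E] [MeasurableSpace E]
  [OpensMeasurableSpace E]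

theorem exists_finset_measure_forall_le_edist_lt {g : Ω → E} (hg : AEMeasurable g P)
    {r δ : ℝ≥0∞} (hr : 0 < r) (hδ : 0 < δ) :
    ∃ F : Finset E, P {ω | ∀ x ∈ F, r ≤ edist (g ω) x} < δ := by
  classical
  rcases isEmpty_or_nonempty Ω with _ | ⟨⟨ω₀⟩⟩
  · exact ⟨∅, by simpa [P.eq_zero_of_isEmpty] using hδ⟩
  have : Nonempty E := ⟨g ω₀⟩
  let c := TopologicalSpace.denseSeq E
  have c_cover : ⋂ n, {ω | r ≤ edist (g ω) (c n)} = ∅ := by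
    refine eq_empty_of_forall_notMem fun ω hω => ?_
    obtain ⟨n, hn⟩ := (TopologicalSpace.denseRange_denseSeq E).exists_mem_open
      Metric.isOpen_eball ⟨g ω, Metric.mem_eball_self hr⟩
    exact (Metric.mem_eball'.1 hn).not_ge (mem_iInter.1 hω n)
  have c_meas (n : ℕ) : NullMeasurableSet {ω | r ≤ edist (g ω) (c n)} P :=
    (hg.edist aemeasurable_const).nullMeasurable measurableSet_Ici
  obtain ⟨m, hm⟩ := exists_measure_iInter_lt c_meas hδ ⟨0, measure_ne_top P _⟩ c_cover
  refine ⟨(Finset.Iic m).image c, ?_⟩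
  convert hm using 2
  ext ω
  simp

theorem tendstoInMeasure_of_forall_isOpen {f : ι → Ω → E} {g : Ω → E} {l : Filter ι}
    (hg : AEMeasurable g P)
    (h : ∀ U : Set E, IsOpen U → Tendsto (fun i => P (g ⁻¹' U \ f i ⁻¹' U)) l (𝓝 0)) :
    TendstoInMeasure P f l g := by
  intro ε hε
  refine ENNReal.tendsto_nhds_zero.2 fun δ hδ => ?_
  obtain ⟨F, hF⟩ := exists_finset_measure_forall_le_edist_lt hg (ENNReal.half_pos hε.ne')
    (ENNReal.half_pos hδ.ne')
  let B (x : E) : Set E := Metric.eball x (ε / 2)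
  have escape_sum : Tendsto (fun i => ∑ x ∈ F, P (g ⁻¹' B x \ f i ⁻¹' B x)) l (𝓝 0) := by
    simpa using tendsto_finsetSum F fun x _ => h (B x) Metric.isOpen_eball
  have cover (i : ι) : {ω | ε ≤ edist (f i ω) (g ω)} ⊆
      {ω | ∀ x ∈ F, ε / 2 ≤ edist (g ω) x} ∪ ⋃ x ∈ F, g ⁻¹' B x \ f i ⁻¹' B x := by
    intro ω hω
    by_contra hnot
    simp only [mem_union, mem_ofPred_eq, mem_iUnion, Set.mem_sdiff, mem_preimage, not_or,
      not_forall, not_exists, not_and, not_not, not_le, exists_prop] at hnot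
    obtain ⟨⟨x, hxF, hgx⟩, hfg⟩ := hnot
    have hfx : edist (f i ω) x < ε / 2 := hfg x hxF hgx
    have : edist (f i ω) (g ω) < ε / 2 + ε / 2 :=
      (edist_triangle_right _ _ x).trans_lt (ENNReal.add_lt_add hfx hgx)
    exact (this.trans_eq (ENNReal.add_halves ε)).not_ge hω
  filter_upwards [ENNReal.tendsto_nhds_zero.1 escape_sum _ (ENNReal.half_pos hδ.ne')] with i hi
  calc P {ω | ε ≤ edist (f i ω) (g ω)}
      ≤ P {ω | ∀ x ∈ F, ε / 2 ≤ edist (g ω) x} + P (⋃ x ∈ F, g ⁻¹' B x \ f i ⁻¹' B x) :=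
        (measure_mono (cover i)).trans (measure_union_le _ _)
    _ ≤ δ / 2 + δ / 2 := add_le_add hF.le ((measure_biUnion_finset_le _ _).trans hi)
    _ = δ := ENNReal.add_halves δ

end ConvergenceInMeasure

section Translation

variable {G Ω : Type*} [AddGroup G] [TopologicalSpace G] [IsTopologicalAddGroup G]
  [MeasurableSpace G] [BorelSpace G] [MeasurableSpace Ω]
  {μ : Measure G} [μ.IsAddLeftInvariant] [IsLocallyFiniteMeasure μ] [μ.InnerRegularCompactLTTop]

theorem tendsto_measure_symmDiff_preimage_const_add {S : Set G} (hS : NullMeasurableSet S μ)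
    (hμS : μ S ≠ ∞) (t₀ : G) :
    Tendsto (fun t => μ (((t + ·) ⁻¹' S) ∆ ((t₀ + ·) ⁻¹' S))) (𝓝 t₀) (𝓝 0) := by
  let τ : C(G, C(G, G)) := ContinuousMap.curry ⟨fun p : G × G => p.1 + p.2, continuous_add⟩
  have τ_preserving (t : G) : MeasurePreserving (τ t) μ μ := measurePreserving_add_left μ t
  exact tendsto_measure_symmDiff_preimage_nhds_zero (f := τ) (g := τ t₀) (τ.continuous.tendsto t₀)
    (.of_forall τ_preserving) (τ_preserving t₀) hS hμS

theorem tendsto_measure_prod_symmDiff_preimage_const_add [FirstCountableTopology G] [SFinite μ]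
    {P : Measure Ω} [SFinite P] {S : Set (G × Ω)} (hS : MeasurableSet S)
    (hSfin : μ.prod P S ≠ ∞) (t₀ : G) :
    Tendsto (fun t => μ.prod P
      ((Prod.map (t + ·) id ⁻¹' S) ∆ (Prod.map (t₀ + ·) id ⁻¹' S))) (𝓝 t₀) (𝓝 0) := by
  let slice (ω : Ω) : Set G := (·, ω) ⁻¹' S
  have slice_meas (ω : Ω) : MeasurableSet (slice ω) := measurable_prodMk_right hS
  have slice_integral : ∫⁻ ω, μ (slice ω) ∂P ≠ ∞ := by
    rwa [← Measure.prod_apply_symm hS]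
  have symmDiff_meas (t : G) :
      MeasurableSet ((Prod.map (t + ·) id ⁻¹' S) ∆ (Prod.map (t₀ + ·) id ⁻¹' S)) :=
    (((measurable_const_add t).prodMap measurable_id) hS).symmDiff
      (((measurable_const_add t₀).prodMap measurable_id) hS)
  simp only [Measure.prod_apply_symm (symmDiff_meas _)]
  rw [← lintegral_zero (μ := P)]
  refine tendsto_lintegral_filter_of_dominated_convergence (fun ω => μ (slice ω) + μ (slice ω))
    (.of_forall fun t => measurable_measure_prodMk_right (symmDiff_meas t))
    (.of_forall fun t => .of_forall fun ω => ?_) ?_ ?_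
  · calc μ (((t + ·) ⁻¹' slice ω) ∆ ((t₀ + ·) ⁻¹' slice ω))
        ≤ μ ((t + ·) ⁻¹' slice ω) + μ ((t₀ + ·) ⁻¹' slice ω) :=
          (measure_mono symmDiff_subset_union).trans (measure_union_le _ _)
      _ = μ (slice ω) + μ (slice ω) := by simp only [measure_preimage_add]
  · rw [lintegral_add_left (measurable_measure_prodMk_right hS)]
    exact ENNReal.add_ne_top.2 ⟨slice_integral, slice_integral⟩
  · filter_upwards [ae_lt_top (measurable_measure_prodMk_right hS) slice_integral] with ω hω
    exact tendsto_measure_symmDiff_preimage_const_add (slice_meas ω).nullMeasurableSet hω.ne t₀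

end Translation

/-- Strict stationarity of a random field `X` indexed by `G`: its law on the space of functions
`G → E`, with the product σ-algebra, is invariant under (right) translation of the index. As
`Measure.map` is `0` along a map that is not a.e. measurable, this is meaningful only when every
`X t` is measurable. -/
def IsStationaryField {G Ω E : Type*} [Add G] [MeasurableSpace Ω] [MeasurableSpace E]
    (X : G → Ω → E) (P : Measure Ω) : Prop :=
  ∀ t : G, P.map (fun ω s => X (s + t) ω) = P.map (fun ω s => X s ω)

namespace IsStationaryField

variable {G Ω E : Type*} [MeasurableSpace Ω] [MeasurableSpace E] {P : Measure Ω} {X : G → Ω → E}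

theorem identDistrib_prodMk [Add G] (hstat : IsStationaryField X P) (hX : ∀ t, Measurable (X t))
    (t u s : G) :
    IdentDistrib (fun ω => (X (t + s) ω, X (u + s) ω)) (fun ω => (X t ω, X u ω)) P P := by
  have field_identDistrib : IdentDistrib (fun ω v => X (v + s) ω) (fun ω v => X v ω) P P :=
    ⟨(measurable_pi_lambda _ fun v => hX (v + s)).aemeasurable,
      (measurable_pi_lambda _ hX).aemeasurable, hstat s⟩
  exact field_identDistrib.comp ((measurable_pi_apply t).prodMk (measurable_pi_apply u))

theorem measure_symmDiff_preimage_add [Add G] (hstat : IsStationaryField X P)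
    (hX : ∀ t, Measurable (X t)) {A : Set E} (hA : MeasurableSet A) (t u s : G) :
    P ((X (t + s) ⁻¹' A) ∆ (X (u + s) ⁻¹' A)) = P ((X t ⁻¹' A) ∆ (X u ⁻¹' A)) :=
  (hstat.identDistrib_prodMk hX t u s).measure_mem_eq
    ((measurable_fst hA).symmDiff (measurable_snd hA))

theorem mul_measure_symmDiff_preimage_le [Add G] [MeasurableSpace G] [MeasurableAdd G]
    {μ : Measure G} [SFinite P] (hstat : IsStationaryField X P)
    (hX : Measurable (uncurry X)) {A : Set E} (hA : MeasurableSet A) {K V : Set G}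
    (hK : MeasurableSet K) {t u : G} (ht : MapsTo (t + ·) V K) (hu : MapsTo (u + ·) V K) :
    μ V * P ((X t ⁻¹' A) ∆ (X u ⁻¹' A)) ≤
      μ.prod P ((Prod.map (t + ·) id ⁻¹' (Prod.fst ⁻¹' K ∩ uncurry X ⁻¹' A)) ∆
        (Prod.map (u + ·) id ⁻¹' (Prod.fst ⁻¹' K ∩ uncurry X ⁻¹' A))) := by
  set S : Set (G × Ω) := Prod.fst ⁻¹' K ∩ uncurry X ⁻¹' A
  have hS : MeasurableSet S := (measurable_fst hK).inter (hX hA)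
  have symmDiff_meas : MeasurableSet
      ((Prod.map (t + ·) id ⁻¹' S) ∆ (Prod.map (u + ·) id ⁻¹' S)) :=
    (((measurable_const_add t).prodMap measurable_id) hS).symmDiff
      (((measurable_const_add u).prodMap measurable_id) hS)
  have slice_eq {v s : G} (hv : v + s ∈ K) :
      Prod.mk s ⁻¹' (Prod.map (v + ·) id ⁻¹' S) = X (v + s) ⁻¹' A := by
    ext ω
    simp [S, hv]
  rw [Measure.prod_apply symmDiff_meas, mul_comm]
  refine (mul_le_mul_right (measure_mono fun s hs => ?_) _).trans
    (mul_meas_ge_le_lintegral (measurable_measure_prodMk_left symmDiff_meas) _)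
  rw [mem_ofPred_eq, preimage_symmDiff, slice_eq (ht hs), slice_eq (hu hs),
    hstat.measure_symmDiff_preimage_add (fun _ => hX.of_uncurry_left) hA]

variable [AddGroup G] [TopologicalSpace G] [IsTopologicalAddGroup G] [LocallyCompactSpace G]
  [SecondCountableTopology G] [MeasurableSpace G] [BorelSpace G] [IsFiniteMeasure P]

theorem tendsto_measure_symmDiff_preimage (hstat : IsStationaryField X P)
    (hX : Measurable (uncurry X)) {A : Set E} (hA : MeasurableSet A) (t₀ : G) :
    Tendsto (fun t => P ((X t ⁻¹' A) ∆ (X t₀ ⁻¹' A))) (𝓝 t₀) (𝓝 0) := by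
  let μ : Measure G := Measure.addHaar
  obtain ⟨K, ht₀K, hKo, hμK⟩ := μ.exists_isOpen_measure_lt_top t₀
  obtain ⟨U, V, hUo, ht₀U, hVo, h0V, hUV⟩ :
      ∃ U V : Set G, IsOpen U ∧ t₀ ∈ U ∧ IsOpen V ∧ 0 ∈ V ∧ U ×ˢ V ⊆ (fun p => p.1 + p.2) ⁻¹' K :=
    mem_nhds_prod_iff'.1 <| continuous_add.continuousAt.preimage_mem_nhds <|
      hKo.mem_nhds (by simpa using ht₀K)
  have mapsTo_K {t : G} (ht : t ∈ U) : MapsTo (t + ·) V K := fun s hs =>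
    hUV (mk_mem_prod ht hs)
  have hV0 : μ V ≠ 0 := (hVo.measure_pos μ ⟨0, h0V⟩).ne'
  have hVtop : μ V ≠ ∞ :=
    ((measure_mono (mapsTo_K ht₀U)).trans_eq (measure_preimage_add μ t₀ K)).trans_lt hμK |>.ne
  let S : Set (G × Ω) := Prod.fst ⁻¹' K ∩ uncurry X ⁻¹' A
  have hS : MeasurableSet S := (measurable_fst hKo.measurableSet).inter (hX hA)
  have hSfin : μ.prod P S ≠ ∞ := by
    refine ne_top_of_le_ne_top (ENNReal.mul_ne_top hμK.ne (measure_ne_top P univ)) ?_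
    rw [← Measure.prod_prod]
    exact measure_mono fun p hp => ⟨hp.1, mem_univ _⟩
  have bound_tendsto := ENNReal.Tendsto.div_const
    (tendsto_measure_prod_symmDiff_preimage_const_add hS hSfin t₀) (.inr hV0)
  rw [ENNReal.zero_div] at bound_tendsto
  refine tendsto_nhds_bot_mono bound_tendsto ?_
  filter_upwards [hUo.mem_nhds ht₀U] with t ht
  rw [ENNReal.le_div_iff_mul_le (.inl hV0) (.inl hVtop), mul_comm]
  exact hstat.mul_measure_symmDiff_preimage_le hX hA hKo.measurableSet (mapsTo_K ht)
    (mapsTo_K ht₀U)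

end IsStationaryField

theorem stationary_measurable_field_continuous_in_probability_general {G Ω E : Type*}
    [AddGroup G] [TopologicalSpace G] [IsTopologicalAddGroup G] [LocallyCompactSpace G]
    [SecondCountableTopology G] [MeasurableSpace G] [BorelSpace G]
    [MeasurableSpace Ω] {P : Measure Ω} [IsFiniteMeasure P]
    [PseudoEMetricSpace E] [TopologicalSpace.SeparableSpace E] [MeasurableSpace E]
    [OpensMeasurableSpace E] {X : G → Ω → E} (hX : Measurable (uncurry X))
    (hstat : IsStationaryField X P) (t₀ : G) :
    TendstoInMeasure P X (𝓝 t₀) (X t₀) := by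
  refine tendstoInMeasure_of_forall_isOpen hX.of_uncurry_left.aemeasurable fun U hU => ?_
  exact tendsto_nhds_bot_mono' (hstat.tendsto_measure_symmDiff_preimage hX hU.measurableSet t₀)
    fun t => measure_mono subset_union_right

/-- A jointly measurable, stationary random field `X : ℝ^d × Ω → ℝ`
on a probability space is continuous in probability. -/
theorem stationary_measurable_field_continuous_in_probability
    (d : ℕ) (hd : 1 ≤ d)
    {Ω : Type*} [MeasurableSpace Ω] (P : Measure Ω) [IsProbabilityMeasure P]
    (X : (Fin d → ℝ) → Ω → ℝ)
    (hXmeas : Measurable (fun p : (Fin d → ℝ) × Ω => X p.1 p.2))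
    (hstat : ∀ t : Fin d → ℝ,
      Measure.map (fun ω => (fun s : Fin d → ℝ => X (s + t) ω)) P
        = Measure.map (fun ω => (fun s : Fin d → ℝ => X s ω)) P) :
    ∀ (t₀ : Fin d → ℝ) (ε : ℝ), 0 < ε →
      Tendsto (fun t : Fin d → ℝ => P {ω | ε < |X t ω - X t₀ ω|})
        (nhds t₀) (nhds 0) := by
  intro t₀ ε hε
  have hX := stationary_measurable_field_continuous_in_probability_general hXmeas hstat t₀
  exact tendsto_nhds_bot_mono' (tendstoInMeasure_iff_norm.1 hX ε hε)
    fun t => measure_mono fun ω (hω : ε < |X t ω - X t₀ ω|) => hω.le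
end

section
/- Let d ≥ 1, let (S, 𝒮) be a measurable space, let φ be a jointly measurable ℝ^d-action on S, and let w be a cocycle for φ. Let h : S → [0, ∞] be measurable and let n ∈ ℕ. Then for every s ∈ S, ∫_{ℝ^d} h(φ(t, s)) w(t, s) dt = Σ_{γ ∈ ℤ^d} h_n(φ(2^{-n} γ, s)) · w(2^{-n} γ, s), where both sides are interpreted as values in [0, ∞] (the integral is the Lebesgue integral of a nonnegative measurable function and the sum is an unordered sum over ℤ^d). -/
open MeasureTheory Filter

noncomputable section

/-- The cube `[0, 2^{-n})^d ⊆ ℝ^d`. -/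
def smallCube (d n : ℕ) : Set (Fin d → ℝ) :=
  Set.univ.pi fun _ => Set.Ico (0 : ℝ) ((2 : ℝ) ^ n)⁻¹

/-- The lattice point `2^{-n} γ ∈ ℝ^d` for `γ ∈ ℤ^d`. -/
def latticePt {d : ℕ} (n : ℕ) (γ : Fin d → ℤ) : Fin d → ℝ :=
  fun i => ((2 : ℝ) ^ n)⁻¹ * (γ i : ℝ)

/-- `h_n(s) := ∫_{[0,2^{-n})^d} h(φ(t,s)) w(t,s) dt`. -/
def hTile {S : Type*} {d : ℕ} (n : ℕ) (φ : (Fin d → ℝ) → S → S)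
    (w : (Fin d → ℝ) → S → ℝ) (h : S → ENNReal) (s : S) : ENNReal :=
  ∫⁻ t in smallCube d n, h (φ t s) * ENNReal.ofReal (w t s)

section Tiling

variable {G ι S : Type*} [MeasurableSpace G] {μ : Measure G}

theorem lintegral_cocycle_add_right [Add G] {φ : G → S → S}
    (hφadd : ∀ u v s, φ (u + v) s = φ u (φ v s)) {w : G → S → ℝ}
    (hcoc : ∀ t u s, w (t + u) s = w u s * w t (φ u s)) (h : S → ENNReal) {u : G} {s : S}
    (hw : 0 ≤ w u s) :
    ∫⁻ t, h (φ (t + u) s) * ENNReal.ofReal (w (t + u) s) ∂μ =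
      (∫⁻ t, h (φ t (φ u s)) * ENNReal.ofReal (w t (φ u s)) ∂μ) * ENNReal.ofReal (w u s) := by
  rw [← lintegral_mul_const' _ _ ENNReal.ofReal_ne_top]
  refine lintegral_congr fun t => ?_
  rw [hφadd, hcoc, ENNReal.ofReal_mul hw, mul_assoc, mul_comm (ENNReal.ofReal (w u s))]

variable [AddGroup G] [MeasurableAdd G] [μ.IsAddRightInvariant] [Countable ι] {D : Set G}
  {p : ι → G}

theorem lintegral_eq_tsum_setLIntegral_add_right
    (hD : MeasurableSet D) (hp : ∀ t, ∃! i, t - p i ∈ D) (f : G → ENNReal) :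
    ∫⁻ t, f t ∂μ = ∑' i, ∫⁻ t in D, f (t + p i) ∂μ := by
  let tile (i : ι) : Set G := (· - p i) ⁻¹' D
  have measurableSet_tile (i : ι) : MeasurableSet (tile i) := by
    simpa only [tile, sub_eq_add_neg] using measurable_add_const (-p i) hD
  have iUnion_tile : ⋃ i, tile i = Set.univ :=
    Set.iUnion_eq_univ_iff.2 fun t => (hp t).exists
  have disjoint_tile : Pairwise (Function.onFun Disjoint tile) := fun i j hij =>
    Set.disjoint_left.2 fun t hi hj => hij ((hp t).unique hi hj)
  have preimage_tile (i : ι) : (· + p i) ⁻¹' tile i = D := by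
    ext t
    simp [tile]
  calc ∫⁻ t, f t ∂μ
      = ∑' i, ∫⁻ t in tile i, f t ∂μ := by
        rw [← setLIntegral_univ, ← iUnion_tile, lintegral_iUnion measurableSet_tile disjoint_tile]
    _ = ∑' i, ∫⁻ t in D, f (t + p i) ∂μ := tsum_congr fun i => by
        rw [← (measurePreserving_add_right μ (p i)).setLIntegral_comp_preimage_emb
          (measurableEmbedding_addRight (p i)), preimage_tile]

theorem lintegral_eq_tsum_hTile_general
    (hD : MeasurableSet D) (hp : ∀ t, ∃! i, t - p i ∈ D) {φ : G → S → S}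
    (hφadd : ∀ u v s, φ (u + v) s = φ u (φ v s)) {w : G → S → ℝ} (hw : ∀ t s, 0 ≤ w t s)
    (hcoc : ∀ t u s, w (t + u) s = w u s * w t (φ u s)) (h : S → ENNReal) (s : S) :
    ∫⁻ t, h (φ t s) * ENNReal.ofReal (w t s) ∂μ =
      ∑' i, (∫⁻ t in D, h (φ t (φ (p i) s)) * ENNReal.ofReal (w t (φ (p i) s)) ∂μ) *
        ENNReal.ofReal (w (p i) s) := by
  rw [lintegral_eq_tsum_setLIntegral_add_right hD hp]
  exact tsum_congr fun i => lintegral_cocycle_add_right hφadd hcoc h (hw (p i) s)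

end Tiling

section DyadicTiling

theorem existsUnique_forall_sub_zsmul_mem_Ico {ι : Type*} {α : ι → Type*}
    [∀ i, AddCommGroup (α i)] [∀ i, LinearOrder (α i)] [∀ i, IsOrderedAddMonoid (α i)]
    [∀ i, Archimedean (α i)] {a : ∀ i, α i} (ha : ∀ i, 0 < a i) (b c : ∀ i, α i) :
    ∃! γ : ι → ℤ, ∀ i, b i - γ i • a i ∈ Set.Ico (c i) (c i + a i) := by
  obtain ⟨γ, hγ⟩ := forall_existsUnique_iff.1 fun i =>
    existsUnique_sub_zsmul_mem_Ico (ha i) (b i) (c i)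
  exact ⟨γ, fun i => hγ.2 rfl, fun δ hδ => funext fun i => (hγ.1 (hδ i)).symm⟩

theorem measurableSet_smallCube (d n : ℕ) : MeasurableSet (smallCube d n) :=
  MeasurableSet.univ_pi fun _ => measurableSet_Ico

theorem existsUnique_sub_latticePt_mem_smallCube {d : ℕ} (n : ℕ) (t : Fin d → ℝ) :
    ∃! γ : Fin d → ℤ, t - latticePt n γ ∈ smallCube d n := by
  have side_pos : (0 : ℝ) < ((2 : ℝ) ^ n)⁻¹ := by positivity
  simpa [smallCube, latticePt, mul_comm] using
    existsUnique_forall_sub_zsmul_mem_Ico (fun _ : Fin d => side_pos) t 0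

end DyadicTiling

/-- For a jointly measurable `ℝ^d`-action `φ` with cocycle `w` and
measurable `h : S → [0,∞]`, the integral `∫_{ℝ^d} h(φ(t,s)) w(t,s) dt` equals the sum
`Σ_{γ ∈ ℤ^d} h_n(φ(2^{-n}γ, s)) w(2^{-n}γ, s)`. -/
theorem lintegral_eq_tsum_hTile
    (d : ℕ) (hd : 1 ≤ d)
    {S : Type*} [MeasurableSpace S]
    (φ : (Fin d → ℝ) → S → S)
    (hφmeas : Measurable (Function.uncurry φ))
    (hφ0 : ∀ s, φ 0 s = s)
    (hφadd : ∀ (u v : Fin d → ℝ) (s : S), φ (u + v) s = φ u (φ v s))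
    (w : (Fin d → ℝ) → S → ℝ)
    (hwmeas : Measurable (Function.uncurry w))
    (hwpos : ∀ t s, 0 < w t s)
    (hcoc : ∀ (t h : Fin d → ℝ) (s : S), w (t + h) s = w h s * w t (φ h s))
    (h : S → ENNReal) (hh : Measurable h) (n : ℕ) (s : S) :
    (∫⁻ t, h (φ t s) * ENNReal.ofReal (w t s)) =
      ∑' γ : Fin d → ℤ,
        hTile n φ w h (φ (latticePt n γ) s)
          * ENNReal.ofReal (w (latticePt n γ) s) :=
  lintegral_eq_tsum_hTile_general (measurableSet_smallCube d n)
    (existsUnique_sub_latticePt_mem_smallCube n) hφadd (fun t s => (hwpos t s).le) hcoc h s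
end
end

section
/- Let d ≥ 1, let (S, 𝒮) be a measurable space, let φ be a jointly measurable ℝ^d-action on S, and let w be a cocycle for φ. Let h : S → [0, ∞] be measurable. Then for all m, n ∈ ℕ, the sets {s ∈ S : Σ_{γ ∈ ℤ^d} h_n(φ(2^{-n} γ, s)) w(2^{-n} γ, s) = ∞} and {s ∈ S : Σ_{γ ∈ ℤ^d} h_m(φ(2^{-m} γ, s)) w(2^{-m} γ, s) = ∞} are equal, and both coincide with the set {s ∈ S : ∫_{ℝ^d} h(φ(t, s)) w(t, s) dt = ∞}. -/
open MeasureTheory Filter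

noncomputable section

/-!
The translates `[0, 2⁻ⁿ)^d + 2⁻ⁿ γ`, `γ ∈ ℤ^d`, tile `ℝ^d`. By the cocycle identity and translation
invariance of Lebesgue measure, the term `h_n(φ(2⁻ⁿ γ, s)) w(2⁻ⁿ γ, s)` is the integral of
`t ↦ h(φ(t, s)) w(t, s)` over the tile at `2⁻ⁿ γ`. Hence the sum over `γ` is equal to the integral
over `ℝ^d`, whatever `n` is.
-/

/-- The translates `F + g i` tile the additive group `G`: every point lies in exactly one of them.
The vectors `g i` are not required to form a subgroup. -/
def IsTranslationTiling {G ι : Type*} [AddGroup G] (F : Set G) (g : ι → G) : Prop :=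
  ∀ x, ∃! i, x - g i ∈ F

namespace IsTranslationTiling

variable {G ι : Type*} [AddGroup G] {F : Set G} {g : ι → G}

theorem pairwise_disjoint (hFg : IsTranslationTiling F g) :
    Pairwise (Function.onFun Disjoint fun i => (· - g i) ⁻¹' F) :=
  fun _ _ hij => Set.disjoint_left.2 fun x hi hj => hij ((hFg x).unique hi hj)

theorem iUnion_eq_univ (hFg : IsTranslationTiling F g) : ⋃ i, (· - g i) ⁻¹' F = Set.univ :=
  Set.iUnion_eq_univ_iff.2 fun x => (hFg x).exists

theorem lintegral_eq_tsum [MeasurableSpace G] [MeasurableAdd G] [Countable ι]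
    (hFg : IsTranslationTiling F g) (hF : MeasurableSet F) (μ : Measure G)
    [μ.IsAddRightInvariant] (f : G → ENNReal) :
    ∫⁻ x, f x ∂μ = ∑' i, ∫⁻ x in F, f (x + g i) ∂μ := by
  have measurableSet_tile (i : ι) : MeasurableSet ((· - g i) ⁻¹' F) := by
    simpa only [sub_eq_add_neg] using measurable_add_const (-g i) hF
  have preimage_tile (i : ι) : (· + g i) ⁻¹' ((· - g i) ⁻¹' F) = F := by
    simp only [Set.preimage_preimage, add_sub_cancel_right, Set.preimage_id']
  calc ∫⁻ x, f x ∂μ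
    _ = ∑' i, ∫⁻ x in (· - g i) ⁻¹' F, f x ∂μ := by
      rw [← lintegral_iUnion measurableSet_tile hFg.pairwise_disjoint, hFg.iUnion_eq_univ,
        setLIntegral_univ]
    _ = ∑' i, ∫⁻ x in F, f (x + g i) ∂μ := tsum_congr fun i => by
      rw [← (measurePreserving_add_right μ (g i)).setLIntegral_comp_preimage_emb
        (measurableEmbedding_addRight (g i)), preimage_tile]

end IsTranslationTiling

theorem isTranslationTiling_smallCube_latticePt (d n : ℕ) :
    IsTranslationTiling (smallCube d n) (latticePt n) := by
  have hside : (0 : ℝ) < ((2 : ℝ) ^ n)⁻¹ := by positivity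
  intro x
  choose γ hγ γ_unique using fun i => existsUnique_sub_zsmul_mem_Ico hside (x i) 0
  have mem_tile_iff (δ : Fin d → ℤ) : x - latticePt n δ ∈ smallCube d n ↔
      ∀ i, x i - δ i • ((2 : ℝ) ^ n)⁻¹ ∈ Set.Ico 0 (0 + ((2 : ℝ) ^ n)⁻¹) := by
    simp only [smallCube, latticePt, Set.mem_univ_pi, Pi.sub_apply, zsmul_eq_mul, zero_add,
      mul_comm]
  exact ⟨γ, (mem_tile_iff γ).2 hγ,
    fun δ hδ => funext fun i => γ_unique i (δ i) ((mem_tile_iff δ).1 hδ i)⟩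

section Cocycle

variable {G S : Type*} [MeasurableSpace G] {φ : G → S → S} {w : G → S → ℝ}

theorem lintegral_mul_cocycle [Add G] (hφadd : ∀ u v s, φ (u + v) s = φ u (φ v s))
    (hw : ∀ t s, 0 ≤ w t s) (hcoc : ∀ t u s, w (t + u) s = w u s * w t (φ u s))
    (μ : Measure G) (h : S → ENNReal) (u : G) (s : S) :
    (∫⁻ t, h (φ t (φ u s)) * ENNReal.ofReal (w t (φ u s)) ∂μ) * ENNReal.ofReal (w u s)
      = ∫⁻ t, h (φ (t + u) s) * ENNReal.ofReal (w (t + u) s) ∂μ := by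
  rw [← lintegral_mul_const' _ _ ENNReal.ofReal_ne_top]
  refine lintegral_congr fun t => ?_
  rw [hφadd, hcoc, ENNReal.ofReal_mul (hw u s), mul_assoc, mul_comm (ENNReal.ofReal (w u s))]

theorem tsum_hTile_top_set_eq_general {ι : Type*} [AddGroup G] [MeasurableAdd G] [Countable ι]
    (hφadd : ∀ u v s, φ (u + v) s = φ u (φ v s))
    (hw : ∀ t s, 0 ≤ w t s) (hcoc : ∀ t u s, w (t + u) s = w u s * w t (φ u s))
    {F : Set G} {g : ι → G} (hFg : IsTranslationTiling F g) (hF : MeasurableSet F)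
    (μ : Measure G) [μ.IsAddRightInvariant] (h : S → ENNReal) (s : S) :
    ∑' i, (∫⁻ t in F, h (φ t (φ (g i) s)) * ENNReal.ofReal (w t (φ (g i) s)) ∂μ)
        * ENNReal.ofReal (w (g i) s)
      = ∫⁻ t, h (φ t s) * ENNReal.ofReal (w t s) ∂μ := by
  simp only [lintegral_mul_cocycle hφadd hw hcoc, hFg.lintegral_eq_tsum hF μ]

end Cocycle

/-- For a jointly measurable `ℝ^d`-action `φ` with cocycle `w` and
measurable `h : S → [0,∞]`, the sets where `Σ_{γ ∈ ℤ^d} h_n(φ(2^{-n}γ,s)) w(2^{-n}γ,s) = ∞`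
do not depend on `n`, and they all coincide with the set where
`∫_{ℝ^d} h(φ(t,s)) w(t,s) dt = ∞`. -/
theorem tsum_hTile_top_set_eq
    (d : ℕ) (hd : 1 ≤ d)
    {S : Type*} [MeasurableSpace S]
    (φ : (Fin d → ℝ) → S → S)
    (hφmeas : Measurable (Function.uncurry φ))
    (hφ0 : ∀ s, φ 0 s = s)
    (hφadd : ∀ (u v : Fin d → ℝ) (s : S), φ (u + v) s = φ u (φ v s))
    (w : (Fin d → ℝ) → S → ℝ)
    (hwmeas : Measurable (Function.uncurry w))
    (hwpos : ∀ t s, 0 < w t s)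
    (hcoc : ∀ (t h : Fin d → ℝ) (s : S), w (t + h) s = w h s * w t (φ h s))
    (h : S → ENNReal) (hh : Measurable h) :
    ∀ m n : ℕ,
      ({s : S | (∑' γ : Fin d → ℤ,
          hTile n φ w h (φ (latticePt n γ) s)
            * ENNReal.ofReal (w (latticePt n γ) s)) = ⊤}
        = {s : S | (∑' γ : Fin d → ℤ,
          hTile m φ w h (φ (latticePt m γ) s)
            * ENNReal.ofReal (w (latticePt m γ) s)) = ⊤})
      ∧
      ({s : S | (∑' γ : Fin d → ℤ,
          hTile n φ w h (φ (latticePt n γ) s)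
            * ENNReal.ofReal (w (latticePt n γ) s)) = ⊤}
        = {s : S | (∫⁻ t, h (φ t s) * ENNReal.ofReal (w t s)) = ⊤}) := by
  intro m n
  simp only [hTile, tsum_hTile_top_set_eq_general hφadd (fun t s => (hwpos t s).le) hcoc
    (isTranslationTiling_smallCube_latticePt d _) (measurableSet_smallCube d _), and_self]
end
end

section
/- Let d ≥ 1, let (S, 𝒮) be a measurable space, let φ be a jointly measurable ℝ^d-action on S, and let w be a cocycle for φ. Let f : S → ℝ be measurable, let α > 0, and let (a_γ)_{γ ∈ ℤ^d} be strictly positive real numbers with Σ_{γ ∈ ℤ^d} a_γ = 1. Define h(s) := Σ_{γ ∈ ℤ^d} a_γ ∫_{γ + [0,1)^d} w(t, s) |f(φ(t, s))|^α dt, a measurable function S → [0, ∞]. Then for every s ∈ S, Σ_{β ∈ ℤ^d} w(β, s) h(φ(β, s)) = ∫_{ℝ^d} w(t, s) |f(φ(t, s))|^α dt in [0, ∞]. In particular, the sets {s ∈ S : ∫_{ℝ^d} w(t, s) |f(φ(t, s))|^α dt = ∞} and {s ∈ S : Σ_{β ∈ ℤ^d} w(β, s) h(φ(β, s)) = ∞}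 are equal. -/
open MeasureTheory Filter

noncomputable section

/-- The translated unit cube `γ + [0,1)^d ⊆ ℝ^d` for `γ ∈ ℤ^d`. -/
def unitCubeAt {d : ℕ} (γ : Fin d → ℤ) : Set (Fin d → ℝ) :=
  Set.univ.pi fun i => Set.Ico ((γ i : ℝ)) ((γ i : ℝ) + 1)

/-- `h(s) := Σ_{γ ∈ ℤ^d} a_γ ∫_{γ+[0,1)^d} w(t,s) |f(φ(t,s))|^α dt`. -/
def Hfun {S : Type*} {d : ℕ} (φ : (Fin d → ℝ) → S → S)
    (w : (Fin d → ℝ) → S → ℝ) (f : S → ℝ) (α : ℝ)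
    (a : (Fin d → ℤ) → ℝ) (s : S) : ENNReal :=
  ∑' γ : Fin d → ℤ, ENNReal.ofReal (a γ) *
    ∫⁻ t in unitCubeAt γ,
      ENNReal.ofReal (w t s) * ENNReal.ofReal (|f (φ t s)| ^ α)

/-!
Write `F t = w t s * g (φ t s)` with `g = |f| ^ α`. By the cocycle identity, `w β s` times the
corresponding function of the point `φ β s` is `t ↦ F (t + β)`, so translation invariance turns
its integral over the cube at `γ` into the integral of `F` over the cube at `γ + β`. After
exchanging the two sums, for each `γ` the cubes at `γ + β` tile the space, and what remains is
`∑ γ, a γ` times `∫ F`.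

The cubes enter only as the fibres of the coordinatewise floor `p`, a measurable map with
`p (t + β) = p t + β`.
-/

theorem tsum_setLIntegral_preimage_singleton {X Y : Type*} [MeasurableSpace X] [MeasurableSpace Y]
    [Countable Y] [MeasurableSingletonClass Y] (μ : Measure X) {p : X → Y} (hp : Measurable p)
    (F : X → ENNReal) :
    ∑' y, ∫⁻ x in p ⁻¹' {y}, F x ∂μ = ∫⁻ x, F x ∂μ := by
  rw [← lintegral_iUnion (fun y => hp (measurableSet_singleton y)) (pairwise_disjoint_fiber p),
    ← Set.preimage_iUnion, Set.iUnion_of_singleton, Set.preimage_univ, Measure.restrict_univ]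

theorem tsum_tsum_mul_add {Λ : Type*} [AddGroup Λ] (a I : Λ → ENNReal) :
    ∑' β, ∑' γ, a γ * I (γ + β) = (∑' γ, a γ) * ∑' γ, I γ := by
  calc ∑' β, ∑' γ, a γ * I (γ + β)
      = ∑' γ, a γ * ∑' β, I (γ + β) := by
        rw [ENNReal.tsum_comm]
        exact tsum_congr fun γ => ENNReal.tsum_mul_left
    _ = ∑' γ, a γ * ∑' β, I β :=
        tsum_congr fun γ => congrArg (a γ * ·) ((Equiv.addLeft γ).tsum_eq I)
    _ = (∑' γ, a γ) * ∑' γ, I γ := ENNReal.tsum_mul_right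

section EquivariantMap

variable {G Λ S : Type*} [AddGroup G] [MeasurableSpace G] [MeasurableAdd G] [AddGroup Λ]
  (μ : Measure G) [μ.IsAddRightInvariant] {p : G → Λ}

theorem setLIntegral_preimage_singleton_add_right {h : G} {β : Λ}
    (hph : ∀ t, p (t + h) = p t + β) (F : G → ENNReal) (γ : Λ) :
    ∫⁻ t in p ⁻¹' {γ}, F (t + h) ∂μ = ∫⁻ t in p ⁻¹' {γ + β}, F t ∂μ := by
  have fibre_eq : p ⁻¹' {γ} = (· + h) ⁻¹' (p ⁻¹' {γ + β}) := by
    ext t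
    simp only [Set.mem_preimage, Set.mem_singleton_iff, hph, add_left_inj]
  rw [fibre_eq]
  exact (measurePreserving_add_right μ h).setLIntegral_comp_preimage_emb
    (measurableEmbedding_addRight h) F _

variable {φ : G → S → S} {w : G → S → ENNReal}

theorem cocycle_mul_setLIntegral_preimage_singleton
    (hφ : ∀ u v s, φ (u + v) s = φ u (φ v s)) (hw : ∀ t h s, w (t + h) s = w h s * w t (φ h s))
    (hw_top : ∀ t s, w t s ≠ ⊤) {h : G} {β : Λ} (hph : ∀ t, p (t + h) = p t + β)
    (g : S → ENNReal) (γ : Λ) (s : S) :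
    w h s * ∫⁻ t in p ⁻¹' {γ}, w t (φ h s) * g (φ t (φ h s)) ∂μ =
      ∫⁻ t in p ⁻¹' {γ + β}, w t s * g (φ t s) ∂μ := by
  rw [← setLIntegral_preimage_singleton_add_right μ hph, ← lintegral_const_mul' _ _ (hw_top h s)]
  simp only [hw, hφ, mul_assoc]

theorem tsum_Hfun_eq_lintegral_general [Countable Λ] [MeasurableSpace Λ]
    [MeasurableSingletonClass Λ] (hp : Measurable p) {ι : Λ → G}
    (hpι : ∀ t β, p (t + ι β) = p t + β)
    (hφ : ∀ u v s, φ (u + v) s = φ u (φ v s)) (hw : ∀ t h s, w (t + h) s = w h s * w t (φ h s))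
    (hw_top : ∀ t s, w t s ≠ ⊤) (g : S → ENNReal) (a : Λ → ENNReal) (s : S) :
    ∑' β, w (ι β) s *
        ∑' γ, a γ * ∫⁻ t in p ⁻¹' {γ}, w t (φ (ι β) s) * g (φ t (φ (ι β) s)) ∂μ =
      (∑' γ, a γ) * ∫⁻ t, w t s * g (φ t s) ∂μ := by
  rw [← tsum_setLIntegral_preimage_singleton μ hp, ← tsum_tsum_mul_add]
  refine tsum_congr fun β => ?_
  rw [← ENNReal.tsum_mul_left]
  refine tsum_congr fun γ => ?_
  rw [mul_left_comm, cocycle_mul_setLIntegral_preimage_singleton μ hφ hw hw_top (hpι · β)]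

end EquivariantMap

theorem unitCubeAt_eq_preimage_floor {d : ℕ} (γ : Fin d → ℤ) :
    unitCubeAt γ = (fun (t : Fin d → ℝ) i => ⌊t i⌋) ⁻¹' {γ} := by
  ext t
  simp only [unitCubeAt, Set.mem_univ_pi, Set.mem_Ico, Set.mem_preimage, Set.mem_singleton_iff,
    funext_iff, Int.floor_eq_iff]

theorem tsum_ofReal_mul_Hfun {S : Type*} {d : ℕ} {φ : (Fin d → ℝ) → S → S}
    {w : (Fin d → ℝ) → S → ℝ} (hφ : ∀ u v s, φ (u + v) s = φ u (φ v s)) (hw0 : ∀ t s, 0 ≤ w t s)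
    (hw : ∀ t h s, w (t + h) s = w h s * w t (φ h s)) (f : S → ℝ) (α : ℝ)
    (a : (Fin d → ℤ) → ℝ) (s : S) :
    ∑' β : Fin d → ℤ, ENNReal.ofReal (w (fun i => (β i : ℝ)) s) *
        Hfun φ w f α a (φ (fun i => (β i : ℝ)) s) =
      (∑' γ, ENNReal.ofReal (a γ)) *
        ∫⁻ t, ENNReal.ofReal (w t s) * ENNReal.ofReal (|f (φ t s)| ^ α) := by
  have floor_measurable : Measurable fun (t : Fin d → ℝ) i => ⌊t i⌋ := by fun_prop
  have floor_add (t : Fin d → ℝ) (β : Fin d → ℤ) :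
      (fun i => ⌊(t + fun j => (β j : ℝ)) i⌋) = (fun i => ⌊t i⌋) + β :=
    funext fun i => Int.floor_add_intCast (t i) (β i)
  have ofReal_cocycle (t h : Fin d → ℝ) (s : S) :
      ENNReal.ofReal (w (t + h) s) = ENNReal.ofReal (w h s) * ENNReal.ofReal (w t (φ h s)) := by
    rw [hw, ENNReal.ofReal_mul (hw0 h s)]
  simp only [Hfun, unitCubeAt_eq_preimage_floor]
  exact tsum_Hfun_eq_lintegral_general volume floor_measurable floor_add hφ ofReal_cocycle
    (fun _ _ => ENNReal.ofReal_ne_top) (fun s => ENNReal.ofReal (|f s| ^ α)) _ s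

theorem tsum_ofReal_eq_one {ι : Type*} {a : ι → ℝ} (ha : ∀ i, 0 ≤ a i) (ha1 : ∑' i, a i = 1) :
    ∑' i, ENNReal.ofReal (a i) = 1 := by
  have a_summable : Summable a := by
    by_contra not_summable
    exact zero_ne_one ((tsum_eq_zero_of_not_summable not_summable).symm.trans ha1)
  rw [← ENNReal.ofReal_tsum_of_nonneg ha a_summable, ha1, ENNReal.ofReal_one]

/-- With `h` as above, for every `s`,
`Σ_{β ∈ ℤ^d} w(β,s) h(φ(β,s)) = ∫_{ℝ^d} w(t,s) |f(φ(t,s))|^α dt`, and in particular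
the sets where either side is infinite coincide. -/
theorem tsum_Hfun_eq_lintegral
    (d : ℕ) (hd : 1 ≤ d)
    {S : Type*} [MeasurableSpace S]
    (φ : (Fin d → ℝ) → S → S)
    (hφmeas : Measurable (Function.uncurry φ))
    (hφ0 : ∀ s, φ 0 s = s)
    (hφadd : ∀ (u v : Fin d → ℝ) (s : S), φ (u + v) s = φ u (φ v s))
    (w : (Fin d → ℝ) → S → ℝ)
    (hwmeas : Measurable (Function.uncurry w))
    (hwpos : ∀ t s, 0 < w t s)
    (hcoc : ∀ (t h : Fin d → ℝ) (s : S), w (t + h) s = w h s * w t (φ h s))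
    (f : S → ℝ) (hf : Measurable f) (α : ℝ) (hα : 0 < α)
    (a : (Fin d → ℤ) → ℝ) (ha : ∀ γ, 0 < a γ) (ha1 : ∑' γ, a γ = 1) :
    (∀ s : S,
      (∑' β : Fin d → ℤ,
        ENNReal.ofReal (w (fun i => (β i : ℝ)) s)
          * Hfun φ w f α a (φ (fun i => (β i : ℝ)) s))
      = ∫⁻ t, ENNReal.ofReal (w t s) * ENNReal.ofReal (|f (φ t s)| ^ α))
    ∧
    ({s : S | (∫⁻ t, ENNReal.ofReal (w t s)
        * ENNReal.ofReal (|f (φ t s)| ^ α)) = ⊤}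
      = {s : S | (∑' β : Fin d → ℤ,
        ENNReal.ofReal (w (fun i => (β i : ℝ)) s)
          * Hfun φ w f α a (φ (fun i => (β i : ℝ)) s)) = ⊤}) := by
  have sum_eq (s : S) := tsum_ofReal_mul_Hfun hφadd (fun t s => (hwpos t s).le) hcoc f α a s
  simp only [tsum_ofReal_eq_one (fun γ => (ha γ).le) ha1, one_mul] at sum_eq
  exact ⟨sum_eq, Set.ext fun s => iff_of_eq (congrArg (· = ⊤) (sum_eq s).symm)⟩
end
end

section
/- Let d ≥ 1, let (Ω, F, P) be a probability space, and let φ : ℝ^d × Ω → Ω be a jointly measurable map such that φ(0, ω) = ω and φ(u + v, ω) = φ(u, φ(v, ω)) for all u, v ∈ ℝ^d and ω ∈ Ω, and such that for every t ∈ ℝ^d the map φ_t := φ(t, ·) is measure-preserving (the pushforward of P under φ_t equals P). Then for every measurable f : Ω → ℝ and every t₀ ∈ ℝ^d, f ∘ φ_t converges to f ∘ φ_{t₀} in probability as t → t₀: for every ε > 0, P(|f(φ(t, ·)) − f(φ(t₀, ·))| > ε) → 0 as t → t₀. -/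
open MeasureTheory Filter

/-!
Fix a measurable set `A`. By invariance of `P`, the measure `P (φ_t⁻¹ A ∆ φ_{t₀}⁻¹ A)` does not
change when `t, t₀` are replaced by `t + s, t₀ + s`. Averaging over `s` in a compact set `K` and
exchanging the integrals turns it into the `P`-average over `ω` of the Haar measure of the `s ∈ K`
for which exactly one of `t + s, t₀ + s` lies in `{s | φ_s ω ∈ A}`. For each `ω` this tends to zero
by continuity of translations, and dominated convergence applies. A measurable `f` is handled by
partitioning its target into countably many measurable pieces of small diameter.
-/

open scoped Topology symmDiff ENNReal

section Translation

variable {ι X Y : Type*}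
  [TopologicalSpace X] [R1Space X] [MeasurableSpace X] [BorelSpace X]
  [TopologicalSpace Y] [R1Space Y] [MeasurableSpace Y] [BorelSpace Y]
  {μ : Measure X} {ν : Measure Y} [μ.InnerRegularCompactLTTop] [IsLocallyFiniteMeasure ν]

lemma tendsto_measure_restrict_symmDiff_preimage_nhds_zero
    {l : Filter ι} {g : ι → C(X, Y)} {g₀ : C(X, Y)} {K : Set X} {S : Set Y}
    (hg : Tendsto g l (𝓝 g₀)) (hgmp : ∀ᶠ i in l, MeasurePreserving (g i) μ ν)
    (hg₀mp : MeasurePreserving g₀ μ ν) (hK : IsCompact K) (hS : MeasurableSet S) :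
    Tendsto (fun i ↦ μ.restrict K ((g i ⁻¹' S) ∆ (g₀ ⁻¹' S))) l (𝓝 0) := by
  obtain ⟨U, hKU, hUo, hU⟩ := (hK.image g₀.continuous).exists_open_superset_measure_lt_top ν
  have hK₀ : Set.MapsTo g₀ K U := Set.mapsTo_iff_image_subset.2 hKU
  have hSU : Tendsto (fun i ↦ μ ((g i ⁻¹' (S ∩ U)) ∆ (g₀ ⁻¹' (S ∩ U)))) l (𝓝 0) :=
    tendsto_measure_symmDiff_preimage_nhds_zero hg hgmp hg₀mp
      (hS.inter hUo.measurableSet).nullMeasurableSet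
      (measure_ne_top_of_subset Set.inter_subset_right hU.ne)
  refine tendsto_of_tendsto_of_tendsto_of_le_of_le' tendsto_const_nhds hSU
    (.of_forall fun _ ↦ zero_le) ?_
  filter_upwards [hg.eventually (ContinuousMap.eventually_mapsTo hK hUo hK₀)] with i hKi
  have hmeas : MeasurableSet ((g i ⁻¹' S) ∆ (g₀ ⁻¹' S)) :=
    ((g i).measurable hS).symmDiff (g₀.measurable hS)
  rw [Measure.restrict_apply hmeas]
  refine measure_mono fun x ⟨hx, hxK⟩ ↦ ?_
  simpa only [Set.mem_symmDiff, Set.mem_preimage, Set.mem_inter_iff, hKi hxK, hK₀ hxK,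
    and_true] using hx

lemma tendsto_measure_restrict_symmDiff_preimage_add_left
    {G : Type*} [AddGroup G] [TopologicalSpace G] [IsTopologicalAddGroup G] [MeasurableSpace G]
    [BorelSpace G] (μ : Measure G) [μ.IsAddLeftInvariant] [μ.InnerRegularCompactLTTop]
    [IsLocallyFiniteMeasure μ] {K S : Set G} (hK : IsCompact K) (hS : MeasurableSet S) (t₀ : G) :
    Tendsto (fun t ↦ μ.restrict K (((t + ·) ⁻¹' S) ∆ ((t₀ + ·) ⁻¹' S))) (𝓝 t₀) (𝓝 0) := by
  let translation (t : G) : C(G, G) := ⟨(t + ·), continuous_const_add t⟩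
  have hcont : Continuous translation :=
    ContinuousMap.continuous_of_continuous_uncurry translation continuous_add
  have hmp (t : G) : MeasurePreserving (translation t) μ μ := measurePreserving_add_left μ t
  exact tendsto_measure_restrict_symmDiff_preimage_nhds_zero (g := translation)
    (g₀ := translation t₀) (hcont.tendsto t₀) (.of_forall hmp) (hmp t₀) hK hS

end Translation

section Action

variable {G Ω : Type*} [MeasurableSpace G] [MeasurableSpace Ω] {P : Measure Ω} {φ : G → Ω → Ω}

lemma measurable_uncurry_add_left [Add G] [MeasurableAdd G] (hφ : Measurable (Function.uncurry φ))
    (t : G) : Measurable fun p : G × Ω ↦ φ (t + p.1) p.2 :=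
  hφ.comp ((measurable_fst.const_add t).prodMk measurable_snd)

lemma measure_symmDiff_preimage_eq_lintegral [Add G] [MeasurableAdd G] [SFinite P]
    (hφ : Measurable (Function.uncurry φ)) (hadd : ∀ u v ω, φ (u + v) ω = φ u (φ v ω))
    (hmp : ∀ t, MeasurePreserving (φ t) P P) (ν : Measure G) [IsProbabilityMeasure ν]
    {A : Set Ω} (hA : MeasurableSet A) (t u : G) :
    P ((φ t ⁻¹' A) ∆ (φ u ⁻¹' A)) =
      ∫⁻ ω, ν (((t + ·) ⁻¹' {s | φ s ω ∈ A}) ∆ ((u + ·) ⁻¹' {s | φ s ω ∈ A})) ∂P := by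
  let D : Set (G × Ω) := {p | φ (t + p.1) p.2 ∈ A} ∆ {p | φ (u + p.1) p.2 ∈ A}
  have hD : MeasurableSet D :=
    (measurable_uncurry_add_left hφ t hA).symmDiff (measurable_uncurry_add_left hφ u hA)
  have hsection (s : G) : Prod.mk s ⁻¹' D = φ s ⁻¹' ((φ t ⁻¹' A) ∆ (φ u ⁻¹' A)) := by
    ext ω
    simp only [D, Set.mem_preimage, Set.mem_symmDiff, Set.mem_ofPred_eq, hadd]
  have hmeas : MeasurableSet ((φ t ⁻¹' A) ∆ (φ u ⁻¹' A)) :=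
    ((hmp t).measurable hA).symmDiff ((hmp u).measurable hA)
  calc P ((φ t ⁻¹' A) ∆ (φ u ⁻¹' A))
      = ∫⁻ s, P (φ s ⁻¹' ((φ t ⁻¹' A) ∆ (φ u ⁻¹' A))) ∂ν := by
        simp only [(hmp _).measure_preimage hmeas.nullMeasurableSet, lintegral_const,
          measure_univ, mul_one]
    _ = (ν.prod P) D := by simp only [Measure.prod_apply hD, hsection]
    _ = ∫⁻ ω, ν ((fun s ↦ (s, ω)) ⁻¹' D) ∂P := Measure.prod_apply_symm hD

variable [AddGroup G] [TopologicalSpace G] [IsTopologicalAddGroup G] [LocallyCompactSpace G]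
  [FirstCountableTopology G] [BorelSpace G] [IsFiniteMeasure P]

lemma tendsto_measure_symmDiff_preimage_action
    (hφ : Measurable (Function.uncurry φ)) (hadd : ∀ u v ω, φ (u + v) ω = φ u (φ v ω))
    (hmp : ∀ t, MeasurePreserving (φ t) P P) {A : Set Ω} (hA : MeasurableSet A) (t₀ : G) :
    Tendsto (fun t ↦ P ((φ t ⁻¹' A) ∆ (φ t₀ ⁻¹' A))) (𝓝 t₀) (𝓝 0) := by
  let K : TopologicalSpace.PositiveCompacts G := Classical.arbitrary _
  let ν : Measure G := (Measure.addHaarMeasure K).restrict K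
  have : IsProbabilityMeasure ν :=
    ⟨by rw [Measure.restrict_apply_univ, Measure.addHaarMeasure_self]⟩
  have hshift (t : G) : MeasurableSet {p : G × Ω | φ (t + p.1) p.2 ∈ A} :=
    measurable_uncurry_add_left hφ t hA
  simp only [measure_symmDiff_preimage_eq_lintegral hφ hadd hmp ν hA]
  rw [← lintegral_zero (μ := P)]
  refine tendsto_lintegral_filter_of_dominated_convergence (fun _ ↦ 1)
    (.of_forall fun t ↦ measurable_measure_prodMk_right ((hshift t).symmDiff (hshift t₀)))
    (.of_forall fun t ↦ .of_forall fun ω ↦ prob_le_one) ?_ (.of_forall fun ω ↦ ?_)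
  · simp only [lintegral_const, one_mul, ne_eq, measure_ne_top, not_false_eq_true]
  · exact tendsto_measure_restrict_symmDiff_preimage_add_left _ K.isCompact
      (hφ.comp measurable_prodMk_right hA) t₀

end Action

section InMeasure

variable {ι Ω Ω' : Type*} [MeasurableSpace Ω] [MeasurableSpace Ω'] {P : Measure Ω} {Q : Measure Ω'}
  [IsFiniteMeasure Q] {l : Filter ι} [l.IsCountablyGenerated] {g : ι → Ω → Ω'} {g₀ : Ω → Ω'}

lemma tendsto_measure_comp_ne_of_tendsto_symmDiff {κ : Type*} [Countable κ] [MeasurableSpace κ]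
    [MeasurableSingletonClass κ] (hg : ∀ i, MeasurePreserving (g i) P Q)
    (hlim : ∀ A, MeasurableSet A → Tendsto (fun i ↦ P ((g i ⁻¹' A) ∆ (g₀ ⁻¹' A))) l (𝓝 0))
    {c : Ω' → κ} (hc : Measurable c) :
    Tendsto (fun i ↦ P {ω | c (g i ω) ≠ c (g₀ ω)}) l (𝓝 0) := by
  let leaving (i : ι) (k : κ) : Set Ω := (g i ⁻¹' (c ⁻¹' {k})) \ (g₀ ⁻¹' (c ⁻¹' {k}))
  have hfiber (k : κ) : MeasurableSet (c ⁻¹' {k}) := hc (measurableSet_singleton k)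
  have hleaving_le (i : ι) (k : κ) : P (leaving i k) ≤ Q (c ⁻¹' {k}) := by
    rw [← (hg i).measure_preimage (hfiber k).nullMeasurableSet]
    exact measure_mono Set.sdiff_subset
  have hsummable : ∫⁻ k, Q (c ⁻¹' {k}) ∂Measure.count ≠ ∞ := by
    rw [lintegral_count, ← measure_iUnion (pairwise_disjoint_fiber c) hfiber]
    exact measure_ne_top _ _
  have hleaving (k : κ) : Tendsto (fun i ↦ P (leaving i k)) l (𝓝 0) :=
    tendsto_of_tendsto_of_tendsto_of_le_of_le tendsto_const_nhds (hlim _ (hfiber k))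
      (fun _ ↦ zero_le) fun _ ↦ measure_mono Set.subset_union_left
  have hsum : Tendsto (fun i ↦ ∑' k, P (leaving i k)) l (𝓝 0) := by
    simp only [← lintegral_count]
    rw [← lintegral_zero (μ := Measure.count (α := κ))]
    exact tendsto_lintegral_filter_of_dominated_convergence _
      (.of_forall fun _ ↦ measurable_of_countable _)
      (.of_forall fun i ↦ .of_forall (hleaving_le i)) hsummable (.of_forall hleaving)
  refine tendsto_of_tendsto_of_tendsto_of_le_of_le tendsto_const_nhds hsum
    (fun _ ↦ zero_le) fun i ↦ (measure_mono fun ω hω ↦ ?_).trans (measure_iUnion_le (leaving i))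
  exact Set.mem_iUnion.2 ⟨c (g i ω), rfl, fun h ↦ hω h.symm⟩

variable {E : Type*} [PseudoEMetricSpace E] [TopologicalSpace.SeparableSpace E] [MeasurableSpace E]
  [OpensMeasurableSpace E]

variable (E) in
lemma exists_measurable_nat_edist_lt {ε : ℝ≥0∞} (hε : 0 < ε) :
    ∃ c : E → ℕ, Measurable c ∧ ∀ x y, c x = c y → edist x y < ε := by
  classical
  rcases isEmpty_or_nonempty E with _ | _
  · exact ⟨fun _ ↦ 0, measurable_const, isEmptyElim⟩
  let q : ℕ → E := TopologicalSpace.denseSeq E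
  have hnear (x : E) : ∃ n, q n ∈ Metric.eball x (ε / 2) :=
    (TopologicalSpace.denseRange_denseSeq E).exists_mem_open Metric.isOpen_eball
      ⟨x, Metric.mem_eball_self (ENNReal.half_pos hε.ne')⟩
  let c (x : E) : ℕ := Nat.find (hnear x)
  have hqc (x : E) : edist (q (c x)) x < ε / 2 := Nat.find_spec (hnear x)
  refine ⟨c, measurable_find hnear fun n ↦ ?_, fun x y hxy ↦ ?_⟩
  · simp only [Metric.mem_eball_comm (x := q n)]
    exact Metric.isOpen_eball.measurableSet
  · calc edist x y ≤ edist (q (c x)) x + edist (q (c x)) y := edist_triangle_left _ _ _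
      _ < ε / 2 + ε / 2 := ENNReal.add_lt_add (hqc x) (hxy ▸ hqc y)
      _ = ε := ENNReal.add_halves ε

lemma tendstoInMeasure_comp_of_tendsto_symmDiff (hg : ∀ i, MeasurePreserving (g i) P Q)
    (hlim : ∀ A, MeasurableSet A → Tendsto (fun i ↦ P ((g i ⁻¹' A) ∆ (g₀ ⁻¹' A))) l (𝓝 0))
    {f : Ω' → E} (hf : Measurable f) :
    TendstoInMeasure P (fun i ↦ f ∘ g i) l (f ∘ g₀) := by
  intro ε hε
  obtain ⟨c, hc, hcε⟩ := exists_measurable_nat_edist_lt E hε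
  refine tendsto_of_tendsto_of_tendsto_of_le_of_le tendsto_const_nhds
    (tendsto_measure_comp_ne_of_tendsto_symmDiff hg hlim (hc.comp hf)) (fun _ ↦ zero_le)
    fun i ↦ measure_mono fun ω hω heq ↦ ?_
  exact (hcε _ _ heq).not_ge hω

end InMeasure

theorem measurePreserving_action_continuous_in_probability_general
    {G Ω E : Type*} [AddGroup G] [TopologicalSpace G] [IsTopologicalAddGroup G]
    [LocallyCompactSpace G] [FirstCountableTopology G] [MeasurableSpace G] [BorelSpace G]
    [MeasurableSpace Ω] {P : Measure Ω} [IsFiniteMeasure P]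
    [PseudoEMetricSpace E] [TopologicalSpace.SeparableSpace E] [MeasurableSpace E]
    [OpensMeasurableSpace E] {φ : G → Ω → Ω} (hφ : Measurable (Function.uncurry φ))
    (hadd : ∀ u v ω, φ (u + v) ω = φ u (φ v ω)) (hmp : ∀ t, MeasurePreserving (φ t) P P)
    {f : Ω → E} (hf : Measurable f) (t₀ : G) :
    TendstoInMeasure P (fun t ↦ f ∘ φ t) (𝓝 t₀) (f ∘ φ t₀) :=
  tendstoInMeasure_comp_of_tendsto_symmDiff hmp
    (fun _ hA ↦ tendsto_measure_symmDiff_preimage_action hφ hadd hmp hA t₀) hf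

/-- For a jointly measurable measure-preserving `ℝ^d`-action `φ` on a
probability space and any measurable `f : Ω → ℝ`, `f ∘ φ_t → f ∘ φ_{t₀}` in probability
as `t → t₀`. -/
theorem measurePreserving_action_continuous_in_probability
    (d : ℕ) (hd : 1 ≤ d)
    {Ω : Type*} [MeasurableSpace Ω] (P : Measure Ω) [IsProbabilityMeasure P]
    (φ : (Fin d → ℝ) → Ω → Ω)
    (hφmeas : Measurable (Function.uncurry φ))
    (hφ0 : ∀ ω, φ 0 ω = ω)
    (hφadd : ∀ (u v : Fin d → ℝ) (ω : Ω), φ (u + v) ω = φ u (φ v ω))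
    (hφmp : ∀ t : Fin d → ℝ, MeasurePreserving (φ t) P P) :
    ∀ (f : Ω → ℝ), Measurable f →
      ∀ (t₀ : Fin d → ℝ) (ε : ℝ), 0 < ε →
        Tendsto (fun t : Fin d → ℝ => P {ω | ε < |f (φ t ω) - f (φ t₀ ω)|})
          (nhds t₀) (nhds 0) := by
  intro f hf t₀ ε hε
  exact tendsto_of_tendsto_of_tendsto_of_le_of_le tendsto_const_nhds
    (tendstoInMeasure_iff_dist.1 (measurePreserving_action_continuous_in_probability_general
      hφmeas hφadd hφmp hf t₀) ε hε)
    (fun _ ↦ zero_le) fun _ ↦ measure_mono fun _ (hω : ε < _) ↦ hω.le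
end
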